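/- arXiv:1303.1661 — 4 statements merged into one kernel-verified Lean document; each statement's English description precedes it below -/
import Mathlib

section
/- The quotient map φ : 𝔸 → 𝔸/ℚ, restricted to the set ℱ := [0,1) × ∏_p ℤ_p, is a bijection from ℱ onto 𝔸/ℚ. -/
open IsDedekindDomain

/-- The adele ring of `ℚ`: the product of the Archimedean completion `ℝ`
with the finite adele ring of `ℚ`. -/
noncomputable abbrev AQ : Type := ℝ × FiniteAdeleRing ℤ ℚ

/-- The additive subgroup of principal adeles, i.e. the diagonally embedded copy of `ℚ`. -/
noncomputable def principalQ : AddSubgroup AQ := ((algebraMap ℚ AQ).range).toAddSubgroup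

/-- The compact quotient group `𝔸/ℚ`. -/
noncomputable abbrev AModQ := AQ ⧸ principalQ

/-- The quotient map `φ : 𝔸 → 𝔸/ℚ`. -/
noncomputable def phiQ : AQ → AModQ := QuotientAddGroup.mk

/-- Multiplication by a rational `σ` descends to a continuous endomorphism of `𝔸/ℚ`. -/
noncomputable def mulAct (σ : ℚ) : AModQ →+ AModQ :=
  QuotientAddGroup.map principalQ principalQ (AddMonoidHom.mulLeft (algebraMap ℚ AQ σ))
    (fun x hx => by
      obtain ⟨q, hq⟩ := hx
      exact ⟨σ * q, by simp [map_mul, hq]⟩)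

/-- The fundamental domain `ℱ = [0,1) × ∏_p ℤ_p` inside the adeles. -/
def FD : Set AQ :=
  {x | x.1 ∈ Set.Ico (0 : ℝ) 1 ∧
    ∀ v : HeightOneSpectrum ℤ, x.2 v ∈ v.adicCompletionIntegers ℚ}

/-!
The theorem is an instance of a statement about a Dedekind domain `R` with fraction field `K`, for
which `K ∩ ∏_v R_v = R` and `K + ∏_v R_v` is the whole finite adele ring. Thus a finite adele can
be made integral by subtracting an element of `K` that is unique up to `R`, and the freedom left
is used to move the other component into a fundamental domain for `R`.

The identity `K + ∏_v R_v = 𝔸ᶠ` comes from partial fractions: every element of `K` is the sum of an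
element integral at `v` and an element integral away from `v`. At each of the finitely many places
where a finite adele is not integral, subtract the polar part of a nearby element of `K`.
-/

lemma mk_eq_mk_iff_exists_algebraMap_eq_sub {S A : Type*} [CommRing S] [Ring A] [Algebra S A]
    {x y : A} :
    (QuotientAddGroup.mk x : A ⧸ (algebraMap S A).range.toAddSubgroup) = QuotientAddGroup.mk y ↔
      ∃ s : S, algebraMap S A s = y - x := by
  rw [QuotientAddGroup.eq, neg_add_eq_sub]
  rfl

section DedekindDomain

open HeightOneSpectrum

variable {R : Type*} [CommRing R] [IsDedekindDomain R]
  {K : Type*} [Field K] [Algebra R K] [IsFractionRing R K]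

lemma valuation_div_le_one_of_dvd_mul (v : HeightOneSpectrum R) {a b r : R} (hb : b ≠ 0)
    (hr : r ∉ v.asIdeal) (h : b ∣ a * r) :
    v.valuation K (algebraMap R K a / algebraMap R K b) ≤ 1 := by
  obtain ⟨c, hc⟩ := h
  have hb' : algebraMap R K b ≠ 0 := by simpa using hb
  calc v.valuation K (algebraMap R K a / algebraMap R K b)
      = v.valuation K (algebraMap R K a / algebraMap R K b) * v.valuation K (algebraMap R K r) := by
        rw [v.valuation_eq_one_iff_notMem.2 hr, mul_one]
    _ = v.valuation K (algebraMap R K c) := by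
        rw [← map_mul, div_mul_eq_mul_div, ← map_mul, hc, map_mul, mul_div_cancel_left₀ _ hb']
    _ ≤ 1 := v.valuation_le_one c

lemma exists_mem_pow_notMem_of_ne {v w : HeightOneSpectrum R} (hwv : w ≠ v) (n : ℕ) :
    ∃ r ∈ v.asIdeal ^ n, r ∉ w.asIdeal := by
  refine Set.not_subset.1 fun hle => hwv ?_
  have hvw : v.asIdeal ≤ w.asIdeal := w.isPrime.le_of_pow_le hle
  exact (HeightOneSpectrum.ext (v.isMaximal.eq_of_le w.isPrime.ne_top hvw)).symm

lemma exists_span_singleton_eq_pow_mul (v : HeightOneSpectrum R) {b : R} (hb : b ≠ 0) :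
    ∃ (n : ℕ) (J : Ideal R), Ideal.span {b} = v.asIdeal ^ n * J ∧ ¬ J ≤ v.asIdeal := by
  have hspan : Ideal.span {b} ≠ 0 := by simpa using hb
  obtain ⟨J, hJ, hvJ⟩ :=
    (FiniteMultiplicity.of_prime_left v.prime hspan).exists_eq_pow_mul_and_not_dvd
  exact ⟨_, J, hJ, Ideal.dvd_iff_le.not.1 hvJ⟩

lemma exists_valuation_sub_le_one_forall_ne_valuation_le_one (v : HeightOneSpectrum R) (k : K) :
    ∃ q : K, v.valuation K (k - q) ≤ 1 ∧ ∀ w ≠ v, w.valuation K q ≤ 1 := by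
  -- With `k = a / b`, `(b) = v ^ n * J` and `1 = s + t`, where `s ∈ v ^ n` and `t ∈ J`, the
  -- decomposition is `k = a * s / b + a * t / b`.
  obtain ⟨a, b, hb, rfl⟩ := IsFractionRing.div_surjective R k
  have hb0 : b ≠ 0 := nonZeroDivisors.ne_zero hb
  obtain ⟨n, J, hJ, hJv⟩ := exists_span_singleton_eq_pow_mul v hb0
  have hdvd {x y : R} (hx : x ∈ v.asIdeal ^ n) (hy : y ∈ J) : b ∣ x * y := by
    rw [← Ideal.mem_span_singleton, hJ]
    exact Ideal.mul_mem_mul hx hy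
  have hcop : v.asIdeal ^ n ⊔ J = ⊤ :=
    Ideal.pow_sup_eq_top (v.isMaximal.out.2 _ (left_lt_sup.2 hJv))
  obtain ⟨s, hs, t, ht, hst⟩ := Submodule.mem_sup.1 ((Ideal.eq_top_iff_one _).1 hcop)
  refine ⟨algebraMap R K (a * t) / algebraMap R K b, ?_, fun w hwv => ?_⟩
  · obtain ⟨j, hj, hjv⟩ := Set.not_subset.1 hJv
    have hsub : a - a * t = a * s := by linear_combination (-a) * hst
    rw [← sub_div, ← map_sub, hsub]
    exact valuation_div_le_one_of_dvd_mul v hb0 hjv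
      (by simpa only [mul_assoc] using (hdvd hs hj).mul_left a)
  · obtain ⟨r, hr, hrw⟩ := exists_mem_pow_notMem_of_ne hwv n
    exact valuation_div_le_one_of_dvd_mul w hb0 hrw
      (by simpa only [mul_assoc, mul_comm r] using (hdvd hr ht).mul_left a)

lemma algebraMap_mem_adicCompletionIntegers_iff (v : HeightOneSpectrum R) (q : K) :
    algebraMap K (v.adicCompletion K) q ∈ v.adicCompletionIntegers K ↔ v.valuation K q ≤ 1 := by
  rw [mem_adicCompletionIntegers, algebraMap_adicCompletion, Function.comp_apply,
    Algebra.algebraMap_self_apply, valuedAdicCompletion_eq_valuation']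

lemma exists_sub_algebraMap_mem_adicCompletionIntegers (v : HeightOneSpectrum R)
    (x : v.adicCompletion K) :
    ∃ k : K, x - algebraMap K (v.adicCompletion K) k ∈ v.adicCompletionIntegers K := by
  have hopen : IsOpen {y : v.adicCompletion K | x - y ∈ v.adicCompletionIntegers K} :=
    (Valued.isOpen_valuationSubring (v.adicCompletion K)).preimage
      (by fun_prop : Continuous fun y => x - y)
  exact (denseRange_algebraMap K v).exists_mem_open hopen ⟨x, by simp [zero_mem]⟩

lemma exists_sub_algebraMap_mem_forall_ne_algebraMap_mem (v : HeightOneSpectrum R)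
    (x : v.adicCompletion K) :
    ∃ q : K, x - algebraMap K (v.adicCompletion K) q ∈ v.adicCompletionIntegers K ∧
      ∀ w ≠ v, algebraMap K (w.adicCompletion K) q ∈ w.adicCompletionIntegers K := by
  obtain ⟨k, hk⟩ := exists_sub_algebraMap_mem_adicCompletionIntegers v x
  obtain ⟨q, hqv, hqw⟩ := exists_valuation_sub_le_one_forall_ne_valuation_le_one v k
  refine ⟨q, ?_, fun w hwv => (algebraMap_mem_adicCompletionIntegers_iff w q).2 (hqw w hwv)⟩
  have hkq := (algebraMap_mem_adicCompletionIntegers_iff v _).2 hqv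
  simpa using add_mem hk hkq

variable (R K) in
/-- The group `∏_v R_v` of integral finite adeles, as a subgroup of the finite adele ring of `K`. -/
def integralFiniteAdeles : AddSubgroup (FiniteAdeleRing R K) where
  carrier := {x | ∀ v : HeightOneSpectrum R, x v ∈ v.adicCompletionIntegers K}
  zero_mem' v := zero_mem (v.adicCompletionIntegers K)
  add_mem' hx hy v := add_mem (hx v) (hy v)
  neg_mem' hx v := neg_mem (hx v)

lemma algebraMap_mem_integralFiniteAdeles_iff {q : K} :
    algebraMap K (FiniteAdeleRing R K) q ∈ integralFiniteAdeles R K ↔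
      q ∈ (algebraMap R K).range := by
  refine ⟨fun hq => mem_integers_of_valuation_le_one K q fun v =>
    (algebraMap_mem_adicCompletionIntegers_iff v q).1 (hq v), ?_⟩
  rintro ⟨r, rfl⟩ v
  exact (algebraMap_mem_adicCompletionIntegers_iff v _).2 (v.valuation_le_one r)

theorem exists_sub_algebraMap_mem_integralFiniteAdeles (x : FiniteAdeleRing R K) :
    ∃ q : K, x - algebraMap K (FiniteAdeleRing R K) q ∈ integralFiniteAdeles R K := by
  classical
  have hfin : {v : HeightOneSpectrum R | x v ∉ v.adicCompletionIntegers K}.Finite := x.2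
  choose q hq hq_ne using fun v => exists_sub_algebraMap_mem_forall_ne_algebraMap_mem v (x v)
  refine ⟨∑ v ∈ hfin.toFinset, q v, fun v => ?_⟩
  change x v - algebraMap K (v.adicCompletion K) (∑ w ∈ hfin.toFinset, q w) ∈ _
  rw [map_sum]
  by_cases hv : v ∈ hfin.toFinset
  · rw [← Finset.add_sum_erase _ _ hv, ← sub_sub]
    exact sub_mem (hq v) (sum_mem fun w hw => hq_ne w v (Finset.ne_of_mem_erase hw).symm)
  · exact sub_mem (by simpa using hv) (sum_mem fun w hw => hq_ne w v fun h => hv (h ▸ hw))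

theorem fundamental_domain_bijective_general {B : Type*} [Ring B] [Nontrivial B] [Algebra R B]
    [Algebra K B] [IsScalarTower R K B] {D : Set B}
    (hD : Set.BijOn (QuotientAddGroup.mk : B → B ⧸ (algebraMap R B).range.toAddSubgroup)
      D Set.univ) :
    Set.BijOn
      (QuotientAddGroup.mk : B × FiniteAdeleRing R K →
        (B × FiniteAdeleRing R K) ⧸ (algebraMap K (B × FiniteAdeleRing R K)).range.toAddSubgroup)
      (D ×ˢ (integralFiniteAdeles R K : Set (FiniteAdeleRing R K))) Set.univ := by
  refine ⟨Set.mapsTo_univ _ _, ?_, ?_⟩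
  · rintro ⟨x, a⟩ ⟨hx, ha⟩ ⟨y, b⟩ ⟨hy, hb⟩ hxy
    obtain ⟨q, hq⟩ := mk_eq_mk_iff_exists_algebraMap_eq_sub.1 hxy
    obtain ⟨hq_fst, hq_snd⟩ : algebraMap K B q = y - x ∧ algebraMap K _ q = b - a :=
      Prod.ext_iff.1 hq
    obtain ⟨r, rfl⟩ : q ∈ (algebraMap R K).range := by
      rw [← algebraMap_mem_integralFiniteAdeles_iff, hq_snd]
      exact sub_mem hb ha
    obtain rfl : x = y := by
      refine hD.injOn hx hy (mk_eq_mk_iff_exists_algebraMap_eq_sub.2 ⟨r, ?_⟩)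
      rw [IsScalarTower.algebraMap_apply R K B, hq_fst]
    have hr : algebraMap R K r = 0 := by rwa [sub_self, map_eq_zero] at hq_fst
    rw [hr, map_zero, eq_comm, sub_eq_zero] at hq_snd
    rw [hq_snd]
  · rintro z -
    obtain ⟨⟨x, a⟩, rfl⟩ := QuotientAddGroup.mk_surjective z
    obtain ⟨q, hq⟩ := exists_sub_algebraMap_mem_integralFiniteAdeles a
    obtain ⟨d, hd, hdx⟩ := hD.surjOn (Set.mem_univ (QuotientAddGroup.mk (x - algebraMap K B q)))
    obtain ⟨r, hr⟩ := mk_eq_mk_iff_exists_algebraMap_eq_sub.1 hdx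
    have ha_int : a - algebraMap K _ (q + algebraMap R K r) ∈ integralFiniteAdeles R K := by
      rw [map_add, ← sub_sub]
      exact sub_mem hq (algebraMap_mem_integralFiniteAdeles_iff.2 ⟨r, rfl⟩)
    refine ⟨(d, a - algebraMap K _ (q + algebraMap R K r)), ⟨hd, ha_int⟩,
      mk_eq_mk_iff_exists_algebraMap_eq_sub.2
        ⟨q + algebraMap R K r, Prod.ext ?_ (sub_sub_cancel _ _).symm⟩⟩
    rw [Prod.algebraMap_apply, Prod.fst_sub, map_add, ← IsScalarTower.algebraMap_apply, hr,
      sub_right_comm, add_sub_cancel]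

end DedekindDomain

lemma bijOn_mk_Ico_zero_one {α : Type*} [Ring α] [LinearOrder α] [IsOrderedRing α]
    [FloorRing α] :
    Set.BijOn (QuotientAddGroup.mk : α → α ⧸ (algebraMap ℤ α).range.toAddSubgroup)
      (Set.Ico 0 1) Set.univ := by
  refine ⟨Set.mapsTo_univ _ _, fun x hx y hy hxy => ?_, fun z _ => ?_⟩
  · obtain ⟨n, hn⟩ := mk_eq_mk_iff_exists_algebraMap_eq_sub.1 hxy
    rw [← Int.fract_eq_self.2 hx, ← Int.fract_eq_self.2 hy, eq_comm, Int.fract_eq_fract]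
    exact ⟨n, hn.symm⟩
  · obtain ⟨x, rfl⟩ := QuotientAddGroup.mk_surjective z
    exact ⟨Int.fract x, ⟨Int.fract_nonneg x, Int.fract_lt_one x⟩,
      mk_eq_mk_iff_exists_algebraMap_eq_sub.2 ⟨⌊x⌋, (Int.self_sub_fract x).symm⟩⟩

/-- The quotient map `φ : 𝔸 → 𝔸/ℚ`, restricted to `ℱ = [0,1) × ∏_p ℤ_p`, is a
bijection from `ℱ` onto `𝔸/ℚ`. -/
theorem fundamental_domain_bijective : Set.BijOn phiQ FD Set.univ :=
  fundamental_domain_bijective_general bijOn_mk_Ico_zero_one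
end

section
/- Let ε > 0 and let X ⊆ [0,1) be an ε-dense subset of [0,1) (every point of [0,1) is within distance ε of a point of X). For each prime p set k_p(ε) := max(0, ⌈−log_p ε⌉ − 1) and set N(ε) := ∏_p p^{k_p(ε)} (a finite product, since k_p(ε) = 0 for all sufficiently large p). Then the set { (x; n, n, n, …) : x ∈ X, n ∈ ℤ, 1 ≤ n ≤ N(ε) } ⊆ ℱ — where (x; n, n, n, …) denotes the element of ℱ with real coordinate x and p-adic coordinate equal to the integer n for every prime p — is ε-dense in ℱ with respect to the metric d. -/
instance (p : Nat.Primes) : Fact (Nat.Prime (p : ℕ)) := ⟨p.2⟩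

/-- The space `ℝ × ∏_p ℤ_p` containing the fundamental domain `ℱ = [0,1) × ∏_p ℤ_p`. -/
abbrev FSpace : Type := ℝ × ∀ p : Nat.Primes, ℤ_[(p : ℕ)]

/-- `max(|α_∞ − β_∞ − η|_∞, sup_p |α_p − β_p − η|_p / p)` for a fixed integer `η`. -/
noncomputable def dAux (α β : FSpace) (η : ℤ) : ℝ :=
  max |α.1 - β.1 - (η : ℝ)|
    (⨆ p : Nat.Primes, ‖α.2 p - β.2 p - (η : ℤ_[(p : ℕ)])‖ / (p : ℝ))

/-- The metric `d(α,β) = min_{η ∈ {0,1,−1}} max(|α_∞ − β_∞ − η|_∞, sup_p |α_p − β_p − η|_p / p)`. -/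
noncomputable def dF (α β : FSpace) : ℝ := min (dAux α β 0) (min (dAux α β 1) (dAux α β (-1)))

/-- `k_p(ε) = max(0, ⌈−log_p ε⌉ − 1)`. -/
noncomputable def kp (ε : ℝ) (p : Nat.Primes) : ℕ :=
  (max 0 (⌈-(Real.log ε / Real.log (p : ℝ))⌉ - 1)).toNat

/-- `N(ε) = ∏_p p^{k_p(ε)}`, a finite product since `k_p(ε) = 0` for all large `p`. -/
noncomputable def Neps (ε : ℝ) : ℕ := ∏ᶠ p : Nat.Primes, (p : ℕ) ^ kp ε p

/-!
The exponent `k_p(ε)` is the least `k` with `p ^ (-(k + 1)) ≤ ε`, so the `p`-adic term of `d` is at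
most `ε` as soon as `n ≡ α_p` modulo `p ^ k_p(ε)`. By the Chinese remainder theorem a single `n`
satisfies all these congruences, and it may be chosen in any complete residue system modulo `N(ε)`.
The shift `η = 0` already realises the bound.
-/

section ChineseRemainder

lemma norm_sub_natCast_le_zpow_iff {p : ℕ} [Fact p.Prime] (a : ℤ_[p]) (m k : ℕ) :
    ‖a - m‖ ≤ (p : ℝ) ^ (-k : ℤ) ↔ PadicInt.toZModPow k a = m := by
  rw [PadicInt.norm_le_pow_iff_mem_span_pow, ← PadicInt.ker_toZModPow, RingHom.mem_ker, map_sub,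
    map_natCast, sub_eq_zero]

lemma pairwise_coprime_primes_pow (k : Nat.Primes → ℕ) :
    Pairwise (Function.onFun Nat.Coprime fun p : Nat.Primes => (p : ℕ) ^ k p) :=
  fun p q hpq => Nat.Coprime.pow _ _ <|
    (Nat.coprime_primes p.2 q.2).2 fun h => hpq (Nat.Primes.coe_nat_injective h)

lemma exists_nat_lt_finprod_norm_sub_le {k : Nat.Primes → ℕ} (hk : k.support.Finite)
    (a : ∀ p : Nat.Primes, ℤ_[(p : ℕ)]) :
    ∃ m < ∏ᶠ p : Nat.Primes, (p : ℕ) ^ k p,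
      ∀ p : Nat.Primes, ‖a p - (m : ℤ_[(p : ℕ)])‖ ≤ (p : ℝ) ^ (-k p : ℤ) := by
  have hprod : ∏ᶠ p : Nat.Primes, (p : ℕ) ^ k p = ∏ p ∈ hk.toFinset, (p : ℕ) ^ k p := by
    refine finprod_eq_prod_of_mulSupport_subset _ fun p hp => ?_
    contrapose! hp
    rw [Finset.mem_coe, Set.Finite.mem_toFinset, Function.notMem_support] at hp
    simp only [Function.notMem_mulSupport, hp, pow_zero]
  have hne (p : Nat.Primes) : (p : ℕ) ^ k p ≠ 0 := pow_ne_zero _ p.2.ne_zero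
  have hcop := (pairwise_coprime_primes_pow k).set_pairwise hk.toFinset
  let residue (p : Nat.Primes) : ℕ := (PadicInt.toZModPow (k p) (a p)).val
  let m := Nat.chineseRemainderOfFinset residue _ hk.toFinset (fun p _ => hne p) hcop
  refine ⟨m, hprod ▸ Nat.chineseRemainderOfFinset_lt_prod _ _ (fun p _ => hne p) hcop, fun p => ?_⟩
  by_cases hp : k p = 0
  · simpa [hp] using PadicInt.norm_le_one (a p - (m : ℤ_[(p : ℕ)]))
  · have hmod : (m : ℕ) ≡ residue p [MOD (p : ℕ) ^ k p] := m.2 p (by simpa using hp)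
    have : NeZero ((p : ℕ) ^ k p) := ⟨hne p⟩
    rw [norm_sub_natCast_le_zpow_iff, (ZMod.natCast_eq_natCast_iff _ _ _).2 hmod,
      ZMod.natCast_zmod_val]

end ChineseRemainder

section Exponents

variable {ε : ℝ}

lemma kp_le_iff (hε : 0 < ε) (p : Nat.Primes) (k : ℕ) :
    kp ε p ≤ k ↔ ε⁻¹ ≤ (p : ℝ) ^ (k + 1) := by
  have hp : (1 : ℝ) < p := by exact_mod_cast p.2.one_lt
  calc kp ε p ≤ k ↔ ⌈-(Real.log ε / Real.log p)⌉ ≤ (k : ℤ) + 1 := by unfold kp; omega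
    _ ↔ Real.log ε⁻¹ / Real.log p ≤ (k + 1 : ℕ) := by
      rw [Int.ceil_le, Real.log_inv, neg_div]; push_cast; rfl
    _ ↔ ε⁻¹ ≤ (p : ℝ) ^ (k + 1) := by
      rw [div_le_iff₀ (Real.log_pos hp), ← Real.log_pow,
        Real.log_le_log_iff (inv_pos.2 hε) (pow_pos (one_pos.trans hp) _)]

lemma zpow_neg_kp_div_le (hε : 0 < ε) (p : Nat.Primes) :
    (p : ℝ) ^ (-kp ε p : ℤ) / p ≤ ε := by
  have hle : ε⁻¹ ≤ (p : ℝ) ^ (kp ε p + 1) := (kp_le_iff hε p _).1 le_rfl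
  calc (p : ℝ) ^ (-kp ε p : ℤ) / p = ((p : ℝ) ^ (kp ε p + 1))⁻¹ := by
        rw [zpow_neg, zpow_natCast, pow_succ, mul_inv, div_eq_mul_inv]
    _ ≤ ε := inv_le_of_inv_le₀ hε hle

lemma finite_support_kp (hε : 0 < ε) : (kp ε).support.Finite := by
  have hsmall : (kp ε).support ⊆ (fun p : Nat.Primes => (p : ℕ)) ⁻¹' Set.Iio ⌈ε⁻¹⌉₊ := by
    intro p hp
    contrapose! hp
    have hle : ε⁻¹ ≤ (p : ℝ) := by simpa using hp
    exact Function.notMem_support.2 <| Nat.le_zero.1 <| (kp_le_iff hε p 0).2 <| by simpa using hle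
  exact ((Set.finite_Iio _).preimage Nat.Primes.coe_nat_injective.injOn).subset hsmall

end Exponents

theorem integer_points_eps_dense_general {ε : ℝ} (hε : 0 < ε) (α : FSpace) {x : ℝ}
    (hx : |α.1 - x| ≤ ε) :
    ∃ n : ℤ, 1 ≤ n ∧ n ≤ (Neps ε : ℤ) ∧ dF α (x, fun p => (n : ℤ_[(p : ℕ)])) ≤ ε := by
  -- Approximating `α - 1` by `m` in `[0, N)` puts `m + 1` in the required range `[1, N]`.
  obtain ⟨m, hm, hαm⟩ :=
    exists_nat_lt_finprod_norm_sub_le (finite_support_kp hε) fun p => α.2 p - 1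
  refine ⟨m + 1, by omega, by unfold Neps; omega, (min_le_left _ _).trans (max_le ?_ ?_)⟩
  · simpa using hx
  · refine Real.iSup_le (fun p => ?_) hε.le
    calc ‖α.2 p - ((m + 1 : ℤ) : ℤ_[(p : ℕ)]) - ((0 : ℤ) : ℤ_[(p : ℕ)])‖ / (p : ℝ)
        = ‖α.2 p - 1 - (m : ℤ_[(p : ℕ)])‖ / p := by
          push_cast; rw [sub_zero, add_comm, sub_add_eq_sub_sub]
      _ ≤ (p : ℝ) ^ (-kp ε p : ℤ) / p := by gcongr; exact hαm p
      _ ≤ ε := zpow_neg_kp_div_le hε p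

/-- If `X ⊆ [0,1)` is `ε`-dense in `[0,1)`, then the set
`{(x; n, n, n, …) : x ∈ X, 1 ≤ n ≤ N(ε)}` is `ε`-dense in `ℱ = [0,1) × ∏_p ℤ_p`
with respect to the metric `d`. -/
theorem integer_points_eps_dense (ε : ℝ) (hε : 0 < ε)
    (X : Set ℝ) (hX : X ⊆ Set.Ico (0 : ℝ) 1)
    (hXdense : ∀ y ∈ Set.Ico (0 : ℝ) 1, ∃ x ∈ X, |y - x| ≤ ε) :
    ∀ α : FSpace, α.1 ∈ Set.Ico (0 : ℝ) 1 →
      ∃ x ∈ X, ∃ n : ℤ, 1 ≤ n ∧ n ≤ (Neps ε : ℤ) ∧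
        dF α (x, fun p => (n : ℤ_[(p : ℕ)])) ≤ ε := by
  intro α hα
  obtain ⟨x, hxX, hx⟩ := hXdense α.1 hα
  exact ⟨x, hxX, integer_points_eps_dense_general hε α hx⟩
end

section
/- Suppose γ, δ ∈ ℚ with γ > 0 and δ > 1 are multiplicatively independent. Then for every ε > 0 there exist a ∈ ℕ with a ≥ 1 and b ∈ ℤ such that 1 < γ^a / δ^b < 1 + ε. -/
/-- Nonzero rationals `γ` and `δ` are multiplicatively independent:
`|γ|^a = |δ|^b` with integers `a, b` forces `a = b = 0`. -/
def MultIndep (γ δ : ℚ) : Prop := ∀ a b : ℤ, |γ| ^ a = |δ| ^ b → a = 0 ∧ b = 0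

/-!
Multiplicative independence says that `θ = log γ / log δ` is irrational, so the forward orbit of the
rotation by `θ` visits every nonempty open subset of the circle `ℝ / ℤ` infinitely often. Since
`γ ^ a / δ ^ b = exp ((a * θ - b) * log δ)`, the quotients with `a` arbitrarily large are dense in
the positive reals.
-/

open Filter Set

theorem frequently_exists_natCast_mul_sub_intCast_mem {θ : ℝ} (hθ : Irrational θ) {U : Set ℝ}
    (hU : IsOpen U) (hne : U.Nonempty) :
    ∃ᶠ a : ℕ in atTop, ∃ b : ℤ, a * θ - b ∈ U := by
  obtain ⟨t, ht⟩ := hne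
  have hdense : DenseRange (· • (θ : UnitAddCircle) : ℤ → UnitAddCircle) :=
    AddCircle.denseRange_zsmul_coe_iff.mpr (by rwa [div_one])
  have hcluster : MapClusterPt (t : UnitAddCircle) atTop (fun a : ℕ ↦ a • (θ : UnitAddCircle)) :=
    ((mapClusterPt_atTop_nsmul_tfae _ _).out 0 3).mpr (hdense t)
  have himage : IsOpen ((↑) '' U : Set UnitAddCircle) := QuotientAddGroup.isOpenMap_coe U hU
  refine (hcluster.frequently (himage.mem_nhds (mem_image_of_mem _ ht))).mono ?_
  rintro a ⟨u, hu, hua⟩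
  rw [← AddCircle.coe_nsmul, ← sub_eq_zero, ← AddCircle.coe_sub, AddCircle.coe_eq_zero_iff] at hua
  obtain ⟨b, hb⟩ := hua
  refine ⟨-b, ?_⟩
  convert hu using 1
  simp only [zsmul_eq_mul, nsmul_eq_mul, mul_one] at hb
  push_cast
  linarith

theorem irrational_log_div_log_of_zpow_independent {γ δ : ℝ} (hγ : 0 < γ) (hδ : 0 < δ)
    (hind : ∀ a b : ℤ, γ ^ a = δ ^ b → a = 0 ∧ b = 0) :
    Irrational (Real.log γ / Real.log δ) := by
  have hlogδ : Real.log δ ≠ 0 := by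
    intro h
    have hδ1 : δ = 1 := Real.eq_one_of_pos_of_log_eq_zero hδ h
    exact one_ne_zero (hind 0 1 (by simp [hδ1])).2
  rw [irrational_iff_ne_rational]
  intro m n hn hmn
  have hlog : Real.log (γ ^ n) = Real.log (δ ^ m) := by
    rw [div_eq_div_iff hlogδ (Int.cast_ne_zero.mpr hn)] at hmn
    rw [Real.log_zpow, Real.log_zpow, mul_comm, hmn]
  have hpow : γ ^ n = δ ^ m := Real.log_injOn_pos (zpow_pos hγ n) (zpow_pos hδ m) hlog
  exact hn (hind n m hpow).1

theorem pow_div_zpow_eq_exp {γ δ : ℝ} (hγ : 0 < γ) (hδ : 0 < δ) (hlogδ : Real.log δ ≠ 0)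
    (a : ℕ) (b : ℤ) :
    γ ^ a / δ ^ b = Real.exp ((a * (Real.log γ / Real.log δ) - b) * Real.log δ) := by
  rw [sub_mul, mul_assoc, div_mul_cancel₀ _ hlogδ, Real.exp_sub, ← Real.log_pow, ← Real.log_zpow,
    Real.exp_log (pow_pos hγ a), Real.exp_log (zpow_pos hδ b)]

theorem frequently_exists_pow_div_zpow_mem {γ δ : ℝ} (hγ : 0 < γ) (hδ : 0 < δ)
    (hirr : Irrational (Real.log γ / Real.log δ)) {U : Set ℝ} (hU : IsOpen U)
    (hne : (U ∩ Ioi 0).Nonempty) :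
    ∃ᶠ a : ℕ in atTop, ∃ b : ℤ, γ ^ a / δ ^ b ∈ U := by
  have hlogδ : Real.log δ ≠ 0 := fun h ↦ hirr.ne_zero (by rw [h, div_zero])
  simp only [pow_div_zpow_eq_exp hγ hδ hlogδ]
  obtain ⟨t, htU, ht⟩ := hne
  refine frequently_exists_natCast_mul_sub_intCast_mem hirr
    (U := (fun s ↦ Real.exp (s * Real.log δ)) ⁻¹' U) (hU.preimage (by fun_prop))
    ⟨Real.log t / Real.log δ, ?_⟩
  rwa [mem_preimage, div_mul_cancel₀ _ hlogδ, Real.exp_log ht]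

theorem exists_ratio_close_to_one_general {γ δ : ℝ} (hγ : 0 < γ) (hδ : 0 < δ)
    (hind : ∀ a b : ℤ, γ ^ a = δ ^ b → a = 0 ∧ b = 0) (N : ℕ) {x y : ℝ} (hxy : x < y)
    (hy : 0 < y) :
    ∃ (a : ℕ) (b : ℤ), N ≤ a ∧ x < γ ^ a / δ ^ b ∧ γ ^ a / δ ^ b < y := by
  have hne : (Ioo x y ∩ Ioi 0).Nonempty := by
    rw [Ioo_inter_Ioi, nonempty_Ioo]
    exact sup_lt_iff.mpr ⟨hxy, hy⟩
  have hirr := irrational_log_div_log_of_zpow_independent hγ hδ hind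
  obtain ⟨a, ha, b, hab⟩ :=
    frequently_atTop.mp (frequently_exists_pow_div_zpow_mem hγ hδ hirr isOpen_Ioo hne) N
  exact ⟨a, b, ha, hab⟩

theorem MultIndep.eq_zero_of_cast_zpow_eq {γ δ : ℚ} (hind : MultIndep γ δ) (hγ : 0 < γ)
    (hδ : 0 < δ) (a b : ℤ) (h : (γ : ℝ) ^ a = (δ : ℝ) ^ b) : a = 0 ∧ b = 0 :=
  hind a b (by rw [abs_of_pos hγ, abs_of_pos hδ]; exact_mod_cast h)

/-- If `γ, δ ∈ ℚ` with `γ > 0` and `δ > 1` are multiplicatively independent, then for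
every `ε > 0` there exist `a ∈ ℕ`, `a ≥ 1`, and `b ∈ ℤ` with `1 < γ^a/δ^b < 1 + ε`. -/
theorem exists_ratio_close_to_one (γ δ : ℚ) (hγ : 0 < γ) (hδ : 1 < δ)
    (hind : MultIndep γ δ) (ε : ℝ) (hε : 0 < ε) :
    ∃ (a : ℕ) (b : ℤ), 1 ≤ a ∧
      1 < (γ : ℝ) ^ a / (δ : ℝ) ^ b ∧ (γ : ℝ) ^ a / (δ : ℝ) ^ b < 1 + ε := by
  have hδ0 : 0 < δ := one_pos.trans hδ
  exact exists_ratio_close_to_one_general (Rat.cast_pos.mpr hγ) (Rat.cast_pos.mpr hδ0)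
    (hind.eq_zero_of_cast_zpow_eq hγ hδ0) 1 (by linarith) (by linarith)
end

section
/- Let γ ∈ ℚ and δ ∈ ℤ be multiplicatively independent, Σ = {γ^a δ^b : a, b ∈ ℕ}, and let 𝒫 = {p_1, …, p_m} be the (finite, possibly empty) set of primes p with |γ|_p > 1. Suppose α ∈ 𝔸/ℚ has irrational real coordinate, and suppose there exists q ∈ ℚ such that the class ι(q) ∈ X_𝒫 of the diagonal embedding of q is an accumulation point of the set π(Σα) ⊆ X_𝒫. Then Σα is dense in 𝔸/ℚ. -/
open IsDedekindDomain

instance : Nonempty ↥FD :=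
  ⟨⟨(0, 0), ⟨le_refl 0, zero_lt_one⟩, fun v => (v.adicCompletionIntegers ℚ).zero_mem⟩⟩

/-- The set of finite places where `|γ|_p > 1`. -/
def Pset (γ : ℚ) : Set (HeightOneSpectrum ℤ) := {v | 1 < v.valuation ℚ γ}

/-- The space `ℝ × ∏_{p ∈ 𝒫} ℚ_p`. -/
noncomputable abbrev XP (γ : ℚ) : Type := ℝ × ∀ v : Pset γ, (v : HeightOneSpectrum ℤ).adicCompletion ℚ

/-- The diagonally embedded copy of `ℤ[1/(p_1⋯p_m)]` (the rationals that are integral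
at every place outside `𝒫`) inside `ℝ × ∏_{p ∈ 𝒫} ℚ_p`. -/
noncomputable def iotaSub (γ : ℚ) : AddSubgroup (XP γ) where
  carrier := {z | ∃ q : ℚ, (∀ v : HeightOneSpectrum ℤ, v ∉ Pset γ → v.valuation ℚ q ≤ 1) ∧
    z = ((q : ℝ), fun v => algebraMap ℚ _ q)}
  zero_mem' := ⟨0, fun v _ => by simp, by simp; rfl⟩
  add_mem' := by
    rintro z w ⟨q, hq, rfl⟩ ⟨q', hq', rfl⟩
    exact ⟨q + q', fun v hv => le_trans (Valuation.map_add _ q q')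
      (max_le (hq v hv) (hq' v hv)), by push_cast; simp [Prod.ext_iff, map_add]; rfl⟩
  neg_mem' := by
    rintro z ⟨q, hq, rfl⟩
    exact ⟨-q, fun v hv => by rw [Valuation.map_neg]; exact hq v hv,
      by push_cast; simp [Prod.ext_iff, map_neg]; rfl⟩

/-- The quotient group `X_𝒫 = (ℝ × ∏_{p ∈ 𝒫} ℚ_p)/ι(ℤ[1/(p_1⋯p_m)])`. -/
noncomputable abbrev XPmod (γ : ℚ) := XP γ ⧸ iotaSub γ

/-- The inverse of the bijection `ℱ → 𝔸/ℚ`: the unique representative in the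
fundamental domain. -/
noncomputable def repF : AModQ → ↥FD := Function.invFun (fun x : ↥FD => phiQ (x : AQ))

/-- The projection `π : 𝔸/ℚ → X_𝒫`, sending `φ(x)` for `x ∈ ℱ` to the class of
`(x_∞, x_{p_1}, …, x_{p_m})`. -/
noncomputable def piP (γ : ℚ) (α : AModQ) : XPmod γ :=
  QuotientAddGroup.mk (((repF α : AQ).1, fun v => (repF α : AQ).2 v) : XP γ)

/-! A rational accumulation point of `π(Σα)` provides, for a fixed `n`, adeles `T` representing
elements of `Σα` that are arbitrarily small at `∞` and at the places of `𝒫` and have denominator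
dividing `n` elsewhere; irrationality of `α` gives `T.1 ≠ 0`. Fix a modulus `M`. Since `ℤ/(M * n)`
is finite, there is an even `k` for which `γ ^ k` and `δ ^ k` are idempotent modulo `M * n` outside
`𝒫`. For `1 ≤ a ≤ A` and `1 ≤ b` the multiples `γ ^ (k * a) * δ ^ (k * b) * T` then agree modulo `M`
at all finite places: outside `𝒫` by idempotence, in `𝒫` because `T` was chosen too small for the
bounded power `γ ^ (k * A)` to matter. Their real coordinates nevertheless come close to every real
number modulo `M`, because finitely many multiples of the irrational number `log |γ| / log |δ|`
are already almost dense modulo `1`, so that bounding `a` is no restriction. By strong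
approximation some such multiple of `T` is, up to a rational, close to any prescribed adele. -/

section FiniteAdeles

open IsDedekindDomain.HeightOneSpectrum FiniteAdeleRing
open scoped nonZeroDivisors Topology

variable {R : Type*} (K : Type*) [CommRing R] [IsDedekindDomain R] [Field K] [Algebra R K]
  [IsFractionRing R K]

/-- The subgroup `r • ∏_v R_v` of the finite adeles, for `r : R`: the finite adeles divisible by `r`
at every place. Divisibility in `R_v` is encoded as an inequality of `v`-adic values. -/
def adelicMultiples (r : R) : AddSubgroup (FiniteAdeleRing R K) where
  carrier := {x | ∀ v, Valued.v (x v) ≤ v.valuation K (algebraMap R K r)}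
  zero_mem' _ := (map_zero Valued.v).trans_le zero_le
  add_mem' hx hy v := (Valuation.map_add _ _ _).trans (max_le (hx v) (hy v))
  neg_mem' hx v := (Valuation.map_neg _ _).trans_le (hx v)

variable {K}

theorem valued_algebraMap (v : HeightOneSpectrum R) (k : K) :
    Valued.v (algebraMap K (v.adicCompletion K) k) = v.valuation K k :=
  valuedAdicCompletion_eq_valuation' v k

theorem valuation_le_of_dvd (v : HeightOneSpectrum R) {r s : R} (h : r ∣ s) :
    v.valuation K (algebraMap R K s) ≤ v.valuation K (algebraMap R K r) := by
  obtain ⟨t, rfl⟩ := h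
  rw [map_mul, map_mul]
  exact mul_le_of_le_one_right' (v.valuation_le_one t)

theorem adelicMultiples_le_of_dvd {r s : R} (h : r ∣ s) :
    adelicMultiples K s ≤ adelicMultiples K r :=
  fun _ hx v => (hx v).trans (valuation_le_of_dvd v h)

theorem algebraMap_mem_adelicMultiples {r s : R} (h : r ∣ s) :
    algebraMap K (FiniteAdeleRing R K) (algebraMap R K s) ∈ adelicMultiples K r :=
  fun v => (valued_algebraMap v _).trans_le (valuation_le_of_dvd v h)

theorem setOf_valued_le_mem_nhds_zero (v : HeightOneSpectrum R) {k : K} (hk : k ≠ 0) :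
    {x : v.adicCompletion K | Valued.v x ≤ v.valuation K k} ∈ 𝓝 0 := by
  have hk' : Valued.v.restrict (algebraMap K (v.adicCompletion K) k) ≠ 0 := by
    rwa [ne_eq, map_eq_zero, map_eq_zero]
  convert (Valued.isOpen_closedBall _ hk').mem_nhds (x := 0) (by simp) using 3
  rw [Valuation.restrict_le_iff, valued_algebraMap]

theorem exists_valuation_algebraMap_lt (v : HeightOneSpectrum R) {k : K} (hk : k ≠ 0) :
    ∃ r : R, r ≠ 0 ∧ v.valuation K (algebraMap R K r) < v.valuation K k := by
  obtain ⟨n, d, -, rfl⟩ := IsFractionRing.div_surjective (A := R) k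
  obtain ⟨p, hp, hp0⟩ := Submodule.exists_mem_ne_zero_of_ne_bot v.ne_bot
  have hn : algebraMap R K n ≠ 0 := (div_ne_zero_iff.1 hk).1
  refine ⟨n * p, mul_ne_zero (fun h => hn (by rw [h, map_zero])) hp0, ?_⟩
  calc v.valuation K (algebraMap R K (n * p))
      = v.valuation K (algebraMap R K n) * v.valuation K (algebraMap R K p) := by
        rw [map_mul, map_mul]
    _ < v.valuation K (algebraMap R K n) :=
        mul_lt_of_lt_one_right (by rwa [Valuation.pos_iff]) ((v.valuation_lt_one_iff_mem p).2 hp)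
    _ = v.valuation K (algebraMap R K n / algebraMap R K d) * v.valuation K (algebraMap R K d) := by
        rw [← map_mul, div_mul_cancel₀ _ (div_ne_zero_iff.1 hk).2]
    _ ≤ v.valuation K (algebraMap R K n / algebraMap R K d) :=
        mul_le_of_le_one_right' (v.valuation_le_one d)

theorem exists_setOf_valued_le_subset (v : HeightOneSpectrum R) {s : Set (v.adicCompletion K)}
    (hs : s ∈ 𝓝 0) :
    ∃ r : R, r ≠ 0 ∧ {x | Valued.v x ≤ v.valuation K (algebraMap R K r)} ⊆ s := by
  obtain ⟨g, hg⟩ := Valued.mem_nhds_zero.1 hs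
  obtain ⟨k, hk⟩ := v.valuation_surjective K (MonoidWithZeroHom.ValueGroup₀.embedding g.1)
  have hk0 : k ≠ 0 := by
    rw [← (v.valuation K).ne_zero_iff, hk]
    exact (map_ne_zero_iff _ MonoidWithZeroHom.ValueGroup₀.embedding_strictMono.injective).2
      g.ne_zero
  obtain ⟨r, hr0, hr⟩ := exists_valuation_algebraMap_lt v hk0
  refine ⟨r, hr0, fun x hx => hg ?_⟩
  exact (Valuation.restrict_lt_iff_lt_embedding _).2 ((hx.trans_lt hr).trans_eq hk)

theorem exists_adelicMultiples_subset {U : Set (FiniteAdeleRing R K)} (hU : U ∈ 𝓝 0) :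
    ∃ r : R, r ≠ 0 ∧ (adelicMultiples K r : Set (FiniteAdeleRing R K)) ⊆ U := by
  classical
  have hU' : (fun x : Π v : HeightOneSpectrum R, v.adicCompletionIntegers K =>
      (RestrictedProduct.structureMap _ _ _ x : FiniteAdeleRing R K)) ⁻¹' U ∈ 𝓝 0 :=
    RestrictedProduct.isEmbedding_structureMap.continuous.continuousAt.preimage_mem_nhds hU
  rw [nhds_pi, Filter.mem_pi] at hU'
  obtain ⟨I, hI, t, ht, htU⟩ := hU'
  have hball (v : HeightOneSpectrum R) : ∃ r : R, r ≠ 0 ∧ ∀ x : v.adicCompletionIntegers K,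
      Valued.v (x : v.adicCompletion K) ≤ v.valuation K (algebraMap R K r) → x ∈ t v := by
    obtain ⟨u, hu, hut⟩ := (mem_nhds_subtype _ _ _).1 (ht v)
    obtain ⟨r, hr0, hr⟩ := exists_setOf_valued_le_subset v hu
    exact ⟨r, hr0, fun x hx => hut (hr hx)⟩
  choose r hr0 hr using hball
  refine ⟨∏ v ∈ hI.toFinset, r v, Finset.prod_ne_zero_iff.2 fun v _ => hr0 v, fun x hx => ?_⟩
  have hxint (v : HeightOneSpectrum R) : x v ∈ v.adicCompletionIntegers K :=
    (hx v).trans (v.valuation_le_one _)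
  exact @htU (fun v => ⟨x v, hxint v⟩) fun v hv => hr v _ <|
    (hx v).trans (valuation_le_of_dvd v (Finset.dvd_prod_of_mem r (hI.mem_toFinset.2 hv)))

theorem exists_mul_mem_adelicMultiples_one (x : FiniteAdeleRing R K) :
    ∃ d : R, d ≠ 0 ∧
      algebraMap K (FiniteAdeleRing R K) (algebraMap R K d) * x ∈ adelicMultiples K (1 : R) := by
  classical
  have hfin : {v : HeightOneSpectrum R | x v ∉ v.adicCompletionIntegers K}.Finite :=
    Filter.eventually_cofinite.1 x.2
  choose d hd hdx using fun v : HeightOneSpectrum R =>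
    adicCompletion.mul_nonZeroDivisor_mem_adicCompletionIntegers v (x v)
  refine ⟨∏ v ∈ hfin.toFinset, d v,
    Finset.prod_ne_zero_iff.2 fun v _ => nonZeroDivisors.ne_zero (hd v), fun v => ?_⟩
  change Valued.v (algebraMap K (v.adicCompletion K) (algebraMap R K _) * x v) ≤ _
  rw [map_mul, valued_algebraMap, map_one, map_one]
  by_cases hv : v ∈ hfin.toFinset
  · calc _ ≤ v.valuation K (algebraMap R K (d v)) * Valued.v (x v) := by
          gcongr
          exact valuation_le_of_dvd v (Finset.dvd_prod_of_mem d hv)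
      _ = Valued.v (x v * algebraMap R (v.adicCompletion K) (d v)) := by
          rw [map_mul, mul_comm, valuedAdicCompletion_eq_valuation]
      _ ≤ 1 := hdx v
  · exact mul_le_one' (v.valuation_le_one _) (not_not.1 (mt hfin.mem_toFinset.2 hv))

theorem exists_valued_sub_algebraMap_le (v : HeightOneSpectrum R) {x : v.adicCompletion K}
    (hx : Valued.v x ≤ 1) {r : R} (hr : r ≠ 0) :
    ∃ n : R, Valued.v (x - algebraMap K (v.adicCompletion K) (algebraMap R K n)) ≤
      v.valuation K (algebraMap R K r) := by
  have hrK : algebraMap R K r ≠ 0 := by simpa using hr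
  have hnear : {y | Valued.v (x - y) ≤ v.valuation K (algebraMap R K r)} ∈ 𝓝 x := by
    have hsub : Filter.Tendsto (fun y => x - y) (𝓝 x) (𝓝 0) := by
      simpa using (continuous_const.sub continuous_id).tendsto (x := x) (f := fun y => x - y)
    exact hsub (setOf_valued_le_mem_nhds_zero v hrK)
  obtain ⟨_, ⟨k, rfl⟩, hk⟩ := (denseRange_algebraMap K v).inter_nhds_nonempty hnear
  have hk1 : v.valuation K k ≤ 1 := by
    rw [← valued_algebraMap, ← sub_sub_cancel x (algebraMap K (v.adicCompletion K) k)]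
    exact (Valuation.map_sub _ _ _).trans (max_le hx (hk.trans (v.valuation_le_one r)))
  obtain ⟨n, hn⟩ := exists_valuation_sub_lt_of_integer v hk1
    (Units.mk0 _ ((v.valuation K).ne_zero_iff.2 hrK))
  refine ⟨n, ?_⟩
  rw [← sub_add_sub_cancel x (algebraMap K _ k), ← map_sub]
  refine (Valuation.map_add _ _ _).trans (max_le hk ?_)
  rw [valued_algebraMap, Valuation.map_sub_swap]
  exact hn.le

theorem exists_sub_algebraMap_mem_adelicMultiples_of_integral {x : FiniteAdeleRing R K}
    (hx : x ∈ adelicMultiples K (1 : R)) {r : R} (hr : r ≠ 0) :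
    ∃ n : R, x - algebraMap K (FiniteAdeleRing R K) (algebraMap R K n) ∈ adelicMultiples K r := by
  have hx1 (v : HeightOneSpectrum R) : Valued.v (x v) ≤ 1 := by simpa using hx v
  have hfin : {v : HeightOneSpectrum R | v.valuation K (algebraMap R K r) < 1}.Finite := by
    simp_rw [valuation_lt_one_iff_dvd]
    exact Ideal.finite_factors (by simpa using hr)
  choose n hn using fun v : HeightOneSpectrum R => exists_valued_sub_algebraMap_le v (hx1 v) hr
  obtain ⟨y, hy⟩ := exists_forall_sub_mem_ideal (s := hfin.toFinset)
    (fun v : HeightOneSpectrum R => v.asIdeal) (fun v => multiplicity v.asIdeal (Ideal.span {r}))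
    (fun v _ => v.prime) (fun v _ w _ hvw h => hvw (HeightOneSpectrum.ext h)) (fun v => n v)
  refine ⟨y, fun v => ?_⟩
  by_cases hv : v.valuation K (algebraMap R K r) < 1
  · have hny : v.valuation K (algebraMap R K (y - n v)) ≤ v.valuation K (algebraMap R K r) := by
      rw [valuation_of_algebraMap, valuation_of_algebraMap,
        v.intValuation_eq_exp_neg_multiplicity hr, intValuation_le_pow_iff_mem]
      exact hy v (hfin.mem_toFinset.2 hv)
    change Valued.v (x v - algebraMap K (v.adicCompletion K) (algebraMap R K y)) ≤ _
    rw [← sub_sub_sub_cancel_right _ _ (algebraMap K _ (algebraMap R K (n v))), ← map_sub,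
      ← map_sub]
    refine (Valuation.map_sub _ _ _).trans (max_le (hn v) ?_)
    rwa [valued_algebraMap]
  · refine ((Valuation.map_sub _ _ _).trans (max_le (hx1 v) ?_)).trans (not_lt.1 hv)
    exact (valued_algebraMap v _).trans_le (v.valuation_le_one y)

theorem exists_sub_algebraMap_mem_adelicMultiples (x : FiniteAdeleRing R K) {r : R} (hr : r ≠ 0) :
    ∃ k : K, x - algebraMap K (FiniteAdeleRing R K) k ∈ adelicMultiples K r := by
  obtain ⟨d, hd, hdx⟩ := exists_mul_mem_adelicMultiples_one x
  obtain ⟨n, hn⟩ :=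
    exists_sub_algebraMap_mem_adelicMultiples_of_integral hdx (mul_ne_zero hd hr)
  have hdK : algebraMap R K d ≠ 0 := by simpa using hd
  refine ⟨algebraMap R K n / algebraMap R K d, fun v => ?_⟩
  have hdv : 0 < v.valuation K (algebraMap R K d) := by rwa [Valuation.pos_iff]
  have hscale : algebraMap K (v.adicCompletion K) (algebraMap R K d) * x v -
        algebraMap K (v.adicCompletion K) (algebraMap R K n) =
      algebraMap K (v.adicCompletion K) (algebraMap R K d) *
        (x v - algebraMap K (v.adicCompletion K) (algebraMap R K n / algebraMap R K d)) := by
    rw [mul_sub, ← map_mul, mul_div_cancel₀ _ hdK]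
  have hv : Valued.v (algebraMap K (v.adicCompletion K) (algebraMap R K d) * x v -
      algebraMap K (v.adicCompletion K) (algebraMap R K n)) ≤ _ := hn v
  rw [hscale, map_mul, map_mul, map_mul, valued_algebraMap] at hv
  exact (mul_le_mul_iff_right₀ hdv).1 hv

end FiniteAdeles

section DiophantineApproximation

theorem exists_forall_exists_le_dist_lt {X : Type*} [PseudoMetricSpace X] [CompactSpace X]
    {u : ℕ → X} (hu : DenseRange u) {η : ℝ} (hη : 0 < η) :
    ∃ A : ℕ, ∀ x, ∃ a ≤ A, dist x (u a) < η := by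
  have hcover : Set.univ ⊆ ⋃ a, Metric.ball (u a) η := fun x _ =>
    have ⟨a, ha⟩ := hu.exists_dist_lt x hη
    Set.mem_iUnion.2 ⟨a, ha⟩
  obtain ⟨s, hs⟩ := isCompact_univ.elim_finite_subcover _ (fun _ => Metric.isOpen_ball) hcover
  refine ⟨s.sup id, fun x => ?_⟩
  obtain ⟨a, ha, hxa⟩ := Set.mem_iUnion₂.1 (hs (Set.mem_univ x))
  exact ⟨a, Finset.le_sup (f := id) ha, hxa⟩

theorem exists_nat_mul_add_nat_near {θ : ℝ} (hθ : Irrational θ) {η : ℝ} (hη : 0 < η) :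
    ∃ (A : ℕ) (X₀ : ℝ), ∀ x ≥ X₀, ∃ a b : ℕ, 1 ≤ a ∧ a ≤ A ∧ 1 ≤ b ∧ |a * θ + b - x| < η := by
  have hdense : DenseRange fun a : ℕ => a • (θ : UnitAddCircle) :=
    denseRange_zsmul_iff_nsmul.1 (AddCircle.denseRange_zsmul_coe_iff.2 (by simpa using hθ))
  obtain ⟨A, hA⟩ := exists_forall_exists_le_dist_lt hdense hη
  refine ⟨A + 1, (A + 1) * |θ| + 2, fun x hx => ?_⟩
  obtain ⟨a, haA, ha⟩ := hA ((x - θ : ℝ) : UnitAddCircle)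
  set y := x - (a + 1) * θ with hy
  have hround : |y - round y| < η := by
    rwa [dist_eq_norm, ← AddCircle.coe_nsmul, ← AddCircle.coe_sub, UnitAddCircle.norm_eq,
      show x - θ - a • θ = y by rw [hy, nsmul_eq_mul]; ring] at ha
  have hy2 : 2 ≤ y := by
    have haA' : (a : ℝ) ≤ A := by exact_mod_cast haA
    have hle : (a + 1) * θ ≤ (A + 1) * |θ| :=
      (mul_le_mul_of_nonneg_left (le_abs_self θ) (by positivity)).trans (by gcongr)
    linarith
  have hround1 : 1 ≤ round y := by
    have := (abs_le.1 (abs_sub_round y)).2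
    have : (1 : ℝ) ≤ round y := by linarith
    exact_mod_cast this
  lift round y to ℕ using by lia with b
  refine ⟨a + 1, b, by lia, by lia, by lia, ?_⟩
  rw [abs_sub_comm]
  convert hround using 2
  rw [hy]
  push_cast
  ring

theorem exists_pow_mul_pow_near {g d : ℝ} (hg : 0 < g) (hd : 1 < d)
    (hirr : Irrational (Real.log g / Real.log d)) {ε : ℝ} (hε : 0 < ε) :
    ∃ (A : ℕ) (X₀ : ℝ), 0 < X₀ ∧ ∀ x ≥ X₀, ∃ a b : ℕ, 1 ≤ a ∧ a ≤ A ∧ 1 ≤ b ∧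
      |g ^ a * d ^ b - x| < ε * x := by
  have hlog : 0 < Real.log d := Real.log_pos hd
  obtain ⟨η, hη, hexp⟩ := Metric.continuousAt_iff.1 (Real.continuous_exp.continuousAt (x := 0)) ε hε
  obtain ⟨A, X₀, hA⟩ := exists_nat_mul_add_nat_near hirr (div_pos hη hlog)
  refine ⟨A, Real.exp (X₀ * Real.log d), Real.exp_pos _, fun x hx => ?_⟩
  have hx0 : 0 < x := (Real.exp_pos _).trans_le hx
  obtain ⟨a, b, ha1, haA, hb1, hab⟩ := hA (Real.log x / Real.log d)
    ((le_div_iff₀ hlog).2 ((Real.le_log_iff_exp_le hx0).2 hx))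
  refine ⟨a, b, ha1, haA, hb1, ?_⟩
  set u := a * Real.log g + b * Real.log d - Real.log x with hu
  have hu_lt : |u| < η := by
    have : u = (a * (Real.log g / Real.log d) + b - Real.log x / Real.log d) * Real.log d := by
      rw [hu]
      field_simp
    rwa [this, abs_mul, abs_of_pos hlog, ← lt_div_iff₀ hlog]
  have hexpu : g ^ a * d ^ b = x * Real.exp u := by
    rw [hu, Real.exp_sub, Real.exp_add, Real.exp_nat_mul, Real.exp_nat_mul, Real.exp_log hg,
      Real.exp_log (zero_lt_one.trans hd), Real.exp_log hx0, mul_div_cancel₀ _ hx0.ne']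
  have hnear : |Real.exp u - 1| < ε := by
    simpa [Real.dist_eq] using @hexp u (by simpa [Real.dist_eq] using hu_lt)
  calc |g ^ a * d ^ b - x| = |Real.exp u - 1| * x := by
        rw [hexpu, ← mul_sub_one, abs_mul, abs_of_pos hx0, mul_comm]
    _ < ε * x := by gcongr

theorem exists_pow_mul_pow_mul_near_mod {g d : ℝ} (hg : 0 < g) (hd : 1 < d)
    (hirr : Irrational (Real.log g / Real.log d)) {L ε : ℝ} (hL : 0 < L) (hε : 0 < ε) :
    ∃ (A : ℕ) (ρ : ℝ), 0 < ρ ∧ ∀ t c : ℝ, t ≠ 0 → |t| < ρ →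
      ∃ a b : ℕ, 1 ≤ a ∧ a ≤ A ∧ 1 ≤ b ∧ ∃ m : ℤ, |g ^ a * d ^ b * t - (c + m * L)| < ε := by
  obtain ⟨A, X₀, hX₀, hA⟩ :=
    exists_pow_mul_pow_near hg hd hirr (div_pos hε (mul_pos two_pos hL))
  refine ⟨A, L / X₀, div_pos hL hX₀, ?_⟩
  have key (t c : ℝ) (ht : 0 < t) (htρ : t < L / X₀) : ∃ a b : ℕ, 1 ≤ a ∧ a ≤ A ∧ 1 ≤ b ∧
      ∃ m : ℤ, |g ^ a * d ^ b * t - (c + m * L)| < ε := by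
    obtain ⟨m, ⟨hmL, hm2L⟩, -⟩ := existsUnique_add_zsmul_mem_Ico hL c L
    rw [zsmul_eq_mul] at hmL hm2L
    set s := c + m * L
    obtain ⟨a, b, ha1, haA, hb1, hab⟩ := hA (s / t) <| (le_div_iff₀ ht).2 <| by
      rw [lt_div_iff₀ hX₀] at htρ
      linarith
    refine ⟨a, b, ha1, haA, hb1, m, ?_⟩
    calc |g ^ a * d ^ b * t - s| = |g ^ a * d ^ b - s / t| * t := by
          rw [← abs_of_pos ht, ← abs_mul, sub_mul, abs_of_pos ht, div_mul_cancel₀ _ ht.ne']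
      _ < ε / (2 * L) * (s / t) * t := by gcongr
      _ = ε / (2 * L) * s := by rw [mul_assoc, div_mul_cancel₀ _ ht.ne']
      _ < ε / (2 * L) * (2 * L) := by
          gcongr
          linarith
      _ = ε := div_mul_cancel₀ _ (by positivity)
  intro t c ht htρ
  rcases ht.lt_or_gt with ht | ht
  · obtain ⟨a, b, ha1, haA, hb1, m, hm⟩ := key (-t) (-c) (neg_pos.2 ht) (abs_of_neg ht ▸ htρ)
    refine ⟨a, b, ha1, haA, hb1, -m, ?_⟩
    rw [← abs_neg]
    convert hm using 2
    push_cast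
    ring
  · exact key t c ht (abs_of_pos ht ▸ htρ)

end DiophantineApproximation

section MultiplicativeIndependence

theorem MultIndep.pow {γ δ : ℚ} (h : MultIndep γ δ) {k : ℕ} (hk : k ≠ 0) :
    MultIndep (γ ^ k) (δ ^ k) := by
  intro a b hab
  simp_rw [abs_pow, ← zpow_natCast, ← zpow_mul] at hab
  obtain ⟨ha, hb⟩ := h _ _ hab
  exact ⟨by simpa [hk] using ha, by simpa [hk] using hb⟩

theorem MultIndep.one_lt_abs {γ : ℚ} {δ : ℤ} (h : MultIndep γ δ) (hδ : δ ≠ 0) : 1 < |δ| := by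
  refine lt_of_le_of_ne (Int.one_le_abs hδ) fun h1 => ?_
  have : |(δ : ℚ)| = 1 := by exact_mod_cast h1.symm
  simpa using h 0 1 (by simp [this])

theorem MultIndep.irrational_log_div_log {γ δ : ℚ} (h : MultIndep γ δ) (hγ : γ ≠ 0)
    (hδ : δ ≠ 0) : Irrational (Real.log γ / Real.log δ) := by
  have hγ' : (0 : ℝ) < |(γ : ℝ)| := by simpa
  have hδ' : (0 : ℝ) < |(δ : ℝ)| := by simpa
  have hlog : Real.log δ ≠ 0 := fun h0 => by
    have h1 : |(δ : ℝ)| = 1 := Real.eq_one_of_pos_of_log_eq_zero hδ' (by rwa [Real.log_abs])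
    simpa using h 0 1 (by simp [show |δ| = 1 by exact_mod_cast h1])
  rintro ⟨r, hr⟩
  have hlin : r.den * Real.log γ = r.num * Real.log δ := by
    rw [eq_div_iff hlog] at hr
    rw [← hr, ← mul_assoc]
    congr 1
    exact_mod_cast r.den_mul_eq_num
  have hpow : |(γ : ℝ)| ^ (r.den : ℤ) = |(δ : ℝ)| ^ r.num := by
    refine Real.log_injOn_pos (zpow_pos hγ' _) (zpow_pos hδ' _) ?_
    rw [Real.log_zpow, Real.log_zpow, Real.log_abs, Real.log_abs]
    exact_mod_cast hlin
  exact r.den_nz (by exact_mod_cast (h r.den r.num (by exact_mod_cast hpow)).1)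

end MultiplicativeIndependence

section Congruences

open IsDedekindDomain.HeightOneSpectrum

theorem exists_isIdempotentElem_pow {M : Type*} [Monoid M] [Finite M] (x : M) :
    ∃ n ≠ 0, IsIdempotentElem (x ^ n) := by
  obtain ⟨i, p, hp, hi⟩ : ∃ i p : ℕ, p ≠ 0 ∧ x ^ (i + p) = x ^ i := by
    obtain ⟨i, j, hij, h⟩ := Finite.exists_ne_map_eq_of_infinite fun n : ℕ => x ^ n
    rcases hij.lt_or_gt with hij | hij
    · exact ⟨i, j - i, by lia, by rw [Nat.add_sub_cancel' hij.le, ← h]⟩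
    · exact ⟨j, i - j, by lia, by rw [Nat.add_sub_cancel' hij.le, h]⟩
  have hperiod (c : ℕ) : x ^ (i + p * c) = x ^ i := by
    induction c with
    | zero => rfl
    | succ c ih => rw [mul_add_one, ← add_assoc, add_right_comm, pow_add, hi, ← pow_add, ih]
  have hle : i ≤ p * (i + 1) := by nlinarith [Nat.pos_of_ne_zero hp]
  refine ⟨p * (i + 1), mul_ne_zero hp i.succ_ne_zero, ?_⟩
  calc x ^ (p * (i + 1)) * x ^ (p * (i + 1))
      = x ^ (p * (i + 1) - i) * x ^ (i + p * (i + 1)) := by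
        rw [← pow_add, ← pow_add]
        congr 1
        lia
    _ = x ^ (p * (i + 1)) := by rw [hperiod, ← pow_add, Nat.sub_add_cancel hle]

theorem valuation_den_eq_one {v : HeightOneSpectrum ℤ} {γ : ℚ} (hγ : v.valuation ℚ γ ≤ 1) :
    v.valuation ℚ (γ.den : ℚ) = 1 := by
  simpa using (v.valuation_eq_one_iff_notMem (K := ℚ)).2 (Rat.valuation_le_one_iff_den.1 hγ)

theorem valuation_intCast_le_one (v : HeightOneSpectrum ℤ) (n : ℤ) : v.valuation ℚ (n : ℚ) ≤ 1 :=
  v.valuation_le_one n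

theorem exists_even_pow_mul_pow_congr (γ : ℚ) (δ : ℤ) {D : ℤ} (hD : D ≠ 0) :
    ∃ k ≠ 0, Even k ∧ ∀ a b : ℕ, a ≠ 0 → b ≠ 0 → ∀ v : HeightOneSpectrum ℤ,
      v.valuation ℚ γ ≤ 1 →
      v.valuation ℚ ((γ ^ k) ^ a * (δ ^ k : ℚ) ^ b - γ ^ k * δ ^ k) ≤ v.valuation ℚ (D : ℚ) := by
  have : NeZero D.natAbs := ⟨Int.natAbs_ne_zero.2 hD⟩
  let z : ZMod D.natAbs × ZMod D.natAbs × ZMod D.natAbs := (γ.num, γ.den, δ)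
  obtain ⟨k, hk, heven, hidem⟩ : ∃ k ≠ 0, Even k ∧ IsIdempotentElem (z ^ k) := by
    obtain ⟨k, hk, hidem⟩ := exists_isIdempotentElem_pow z
    exact ⟨k * 2, mul_ne_zero hk two_ne_zero, even_two.mul_left k, pow_mul z k 2 ▸ hidem.pow 2⟩
  have hnum : IsIdempotentElem ((γ.num : ZMod D.natAbs) ^ k) := congrArg Prod.fst hidem
  have hden : IsIdempotentElem ((γ.den : ZMod D.natAbs) ^ k) := congrArg (Prod.fst ∘ Prod.snd) hidem
  have hδ : IsIdempotentElem ((δ : ZMod D.natAbs) ^ k) := congrArg (Prod.snd ∘ Prod.snd) hidem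
  refine ⟨k, hk, heven, fun a b ha hb v hv => ?_⟩
  obtain ⟨e, he⟩ : D ∣ (γ.num ^ k) ^ a * (δ ^ k) ^ b * γ.den ^ k -
      γ.num ^ k * δ ^ k * (γ.den ^ k) ^ a := by
    rw [← Int.natAbs_dvd, ← ZMod.intCast_zmod_eq_zero_iff_dvd]
    push_cast
    rw [hnum.pow_eq ha, hden.pow_eq ha, hδ.pow_eq hb, sub_self]
  have hclear : ((γ ^ k) ^ a * (δ ^ k : ℚ) ^ b - γ ^ k * δ ^ k) * ((γ.den ^ k) ^ a * γ.den ^ k) =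
      D * e := by
    rw [← Int.cast_mul, ← he]
    push_cast
    rw [← Rat.mul_den_eq_num γ]
    ring
  calc v.valuation ℚ ((γ ^ k) ^ a * (δ ^ k : ℚ) ^ b - γ ^ k * δ ^ k)
      = v.valuation ℚ (D : ℚ) * v.valuation ℚ (e : ℚ) := by
        rw [← map_mul, ← hclear]
        simp only [map_mul, map_pow, valuation_den_eq_one hv, one_pow, mul_one]
    _ ≤ v.valuation ℚ (D : ℚ) := mul_le_of_le_one_right' (valuation_intCast_le_one v e)

end Congruences

section AdelicQuotient

open IsDedekindDomain.HeightOneSpectrum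
open scoped Topology

theorem phiQ_sub_algebraMap (x : AQ) (r : ℚ) : phiQ (x - algebraMap ℚ AQ r) = phiQ x :=
  QuotientAddGroup.eq_iff_sub_mem.2 ⟨-r, by simp⟩

theorem exists_sub_eq_algebraMap {x y : AQ} (h : phiQ x = phiQ y) :
    ∃ r : ℚ, x - y = algebraMap ℚ AQ r :=
  have ⟨r, hr⟩ := QuotientAddGroup.eq_iff_sub_mem.1 h
  ⟨r, hr.symm⟩

theorem mulAct_phiQ (σ : ℚ) (x : AQ) : mulAct σ (phiQ x) = phiQ (algebraMap ℚ AQ σ * x) := rfl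

theorem surjective_phiQ_FD : Function.Surjective fun x : FD => phiQ (x : AQ) := by
  intro α
  obtain ⟨x, rfl⟩ := QuotientAddGroup.mk_surjective α
  obtain ⟨r, hr⟩ := exists_sub_algebraMap_mem_adelicMultiples x.2 one_ne_zero
  have hfloor := algebraMap_mem_adelicMultiples (K := ℚ) (one_dvd ⌊x.1 - r⌋)
  refine ⟨⟨x - algebraMap ℚ AQ (r + ⌊x.1 - r⌋), ?_, fun v => ?_⟩, phiQ_sub_algebraMap _ _⟩
  · change x.1 - ((r + ⌊x.1 - r⌋ : ℚ) : ℝ) ∈ _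
    push_cast
    rw [← sub_sub]
    exact ⟨Int.fract_nonneg _, Int.fract_lt_one _⟩
  · have hv := sub_mem hr hfloor v
    rw [sub_sub, ← map_add, map_one, map_one] at hv
    exact hv

theorem phiQ_repF (α : AModQ) : phiQ (repF α) = α :=
  Function.invFun_eq (surjective_phiQ_FD α)

theorem exists_forall_phiQ_mem {y : AQ} {O : Set AModQ} (hO : O ∈ 𝓝 (phiQ y)) :
    ∃ ε : ℝ, 0 < ε ∧ ∃ M : ℤ, 0 < M ∧ ∀ z : AQ, |z.1 - y.1| < ε →
      z.2 - y.2 ∈ adelicMultiples ℚ M → phiQ z ∈ O := by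
  have hcont : Continuous fun z : AQ => phiQ (z + y) :=
    (QuotientAddGroup.continuous_mk (N := principalQ)).comp (continuous_add_const y)
  have hpre : (fun z : AQ => phiQ (z + y)) ⁻¹' O ∈ 𝓝 ((0, 0) : AQ) :=
    hcont.continuousAt.preimage_mem_nhds (by simpa [← Prod.zero_eq_mk] using hO)
  obtain ⟨u, hu, w, hw, huw⟩ := mem_nhds_prod_iff.1 hpre
  obtain ⟨ε, hε, hεu⟩ := Metric.mem_nhds_iff.1 hu
  obtain ⟨M, hM, hMw⟩ := exists_adelicMultiples_subset hw
  refine ⟨ε, hε, |M|, abs_pos.2 hM, fun z hz1 hz2 => ?_⟩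
  have hz : (z - y) ∈ (fun z : AQ => phiQ (z + y)) ⁻¹' O :=
    huw ⟨hεu (by simpa [Real.dist_eq] using hz1),
      hMw (adelicMultiples_le_of_dvd (self_dvd_abs M) hz2)⟩
  simpa using hz

theorem exists_forall_phiQ_mem_of_translate {y : AQ} {O : Set AModQ} (hO : O ∈ 𝓝 (phiQ y)) :
    ∃ ε : ℝ, 0 < ε ∧ ∃ M : ℤ, 0 < M ∧ ∀ (z : AQ) (r : ℚ) (m : ℤ),
      |z.1 - (y.1 + r + m * M)| < ε →
      z.2 - y.2 - algebraMap ℚ (FiniteAdeleRing ℤ ℚ) r ∈ adelicMultiples ℚ M → phiQ z ∈ O := by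
  obtain ⟨ε, hε, M, hM, hOM⟩ := exists_forall_phiQ_mem hO
  refine ⟨ε, hε, M, hM, fun z r m hz1 hz2 => ?_⟩
  rw [← phiQ_sub_algebraMap z (r + (m * M : ℤ))]
  refine hOM _ ?_ ?_
  · change |z.1 - ((r + (m * M : ℤ) : ℚ) : ℝ) - y.1| < ε
    convert hz1 using 2
    push_cast
    ring
  · have hmul := algebraMap_mem_adelicMultiples (K := ℚ) (dvd_mul_left M m)
    convert sub_mem hz2 hmul using 1
    change z.2 - algebraMap ℚ (FiniteAdeleRing ℤ ℚ) (r + (m * M : ℤ)) - y.2 = _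
    rw [map_add, eq_intCast (algebraMap ℤ ℚ)]
    ring

theorem irrational_fst_of_phiQ_eq_mulAct {T x : AQ} {σ : ℚ} (hσ : σ ≠ 0) (hx : Irrational x.1)
    (h : phiQ T = mulAct σ (phiQ x)) : Irrational T.1 := by
  obtain ⟨r, hr⟩ := exists_sub_eq_algebraMap (h.trans (mulAct_phiQ σ x))
  have hfst : T.1 - σ * x.1 = r := congrArg Prod.fst hr
  rw [sub_eq_iff_eq_add.1 hfst]
  exact (hx.ratCast_mul hσ).ratCast_add r

/-- The adele `T` is near zero: its real coordinate is smaller than `ρ`, its coordinates at the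
places of `P` are divisible by `N`, and `n` bounds its denominators at all other places. -/
structure IsNearZero (P : Set (HeightOneSpectrum ℤ)) (ρ : ℝ) (N : ℚ) (n : ℤ) (T : AQ) : Prop where
  abs_fst_lt : |T.1| < ρ
  valued_le : ∀ v ∈ P, Valued.v (T.2 v) ≤ v.valuation ℚ N
  mul_valued_le_one : ∀ v ∉ P, v.valuation ℚ (n : ℚ) * Valued.v (T.2 v) ≤ 1

theorem IsNearZero.sub_mul_mem_adelicMultiples {P : Set (HeightOneSpectrum ℤ)} {Γ Δ : ℚ}
    {M n : ℤ} {A a b : ℕ} {ρ : ℝ} {T : AQ} (hT : IsNearZero P ρ (M / Γ ^ A) n T)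
    (hΓ : ∀ v ∈ P, 1 ≤ v.valuation ℚ Γ) (hΔ : ∀ v ∈ P, v.valuation ℚ Δ ≤ 1)
    (hA : 1 ≤ A) (haA : a ≤ A) (hcongr : ∀ v ∉ P,
      v.valuation ℚ (Γ ^ a * Δ ^ b - Γ * Δ) ≤ v.valuation ℚ ((M * n : ℤ) : ℚ)) :
    algebraMap ℚ (FiniteAdeleRing ℤ ℚ) (Γ ^ a * Δ ^ b - Γ * Δ) * T.2 ∈ adelicMultiples ℚ M := by
  intro v
  change Valued.v (algebraMap ℚ (v.adicCompletion ℚ) _ * T.2 v) ≤ v.valuation ℚ (M : ℚ)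
  rw [map_mul, valued_algebraMap]
  by_cases hv : v ∈ P
  · have hle {i j : ℕ} (hi : i ≤ A) :
        v.valuation ℚ (Γ ^ i * Δ ^ j) ≤ v.valuation ℚ Γ ^ A := by
      rw [map_mul, map_pow, map_pow]
      exact (mul_le_of_le_one_right' (pow_le_one' (hΔ v hv) j)).trans
        (pow_le_pow_right' (hΓ v hv) hi)
    have hΓ0 : v.valuation ℚ Γ ^ A ≠ 0 := pow_ne_zero A (zero_lt_one.trans_le (hΓ v hv)).ne'
    calc v.valuation ℚ (Γ ^ a * Δ ^ b - Γ * Δ) * Valued.v (T.2 v)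
        ≤ v.valuation ℚ Γ ^ A * v.valuation ℚ (M / Γ ^ A) := by
          gcongr
          · refine (Valuation.map_sub _ _ _).trans (max_le (hle haA) ?_)
            simpa only [pow_one] using hle (i := 1) (j := 1) hA
          · exact hT.valued_le v hv
      _ = v.valuation ℚ (M : ℚ) := by rw [map_div₀, map_pow, mul_div_cancel₀ _ hΓ0]
  · calc v.valuation ℚ (Γ ^ a * Δ ^ b - Γ * Δ) * Valued.v (T.2 v)
        ≤ v.valuation ℚ ((M * n : ℤ) : ℚ) * Valued.v (T.2 v) := by
          gcongr
          exact hcongr v hv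
      _ = v.valuation ℚ (M : ℚ) * (v.valuation ℚ (n : ℚ) * Valued.v (T.2 v)) := by
          rw [Int.cast_mul, map_mul, mul_assoc]
      _ ≤ v.valuation ℚ (M : ℚ) := mul_le_of_le_one_right' (hT.mul_valued_le_one v hv)

theorem exists_forall_isNearZero_phiQ_mem {γ : ℚ} {δ : ℤ} (hγ : γ ≠ 0) (hδ : δ ≠ 0)
    (hind : MultIndep γ δ) {n : ℤ} (hn : n ≠ 0) {y : AQ} {O : Set AModQ} (hO : O ∈ 𝓝 (phiQ y)) :
    ∃ ρ > 0, ∃ N ≠ 0, ∀ T : AQ, T.1 ≠ 0 → IsNearZero (Pset γ) ρ N n T →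
      ∃ a b : ℕ, phiQ (algebraMap ℚ AQ (γ ^ a * (δ : ℚ) ^ b) * T) ∈ O := by
  obtain ⟨ε, hε, M, hM, hOM⟩ := exists_forall_phiQ_mem_of_translate hO
  obtain ⟨k, hk, heven, hcongr⟩ := exists_even_pow_mul_pow_congr γ δ (mul_ne_zero hM.ne' hn)
  have hΓ : (0 : ℝ) < (γ ^ k : ℚ) := by exact_mod_cast heven.pow_pos hγ
  have hΔ : (1 : ℝ) < (δ ^ k : ℚ) := by
    exact_mod_cast heven.pow_abs δ ▸ one_lt_pow₀ (hind.one_lt_abs hδ) hk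
  have hirr := (hind.pow hk).irrational_log_div_log (pow_ne_zero k hγ)
    (pow_ne_zero k (Int.cast_ne_zero.2 hδ))
  obtain ⟨A, ρ, hρ, hhit⟩ := exists_pow_mul_pow_mul_near_mod hΓ hΔ hirr (Int.cast_pos.2 hM) hε
  refine ⟨ρ, hρ, M / (γ ^ k) ^ A, div_ne_zero (Int.cast_ne_zero.2 hM.ne')
    (pow_ne_zero A (pow_ne_zero k hγ)), fun T hT0 hT => ?_⟩
  obtain ⟨r, hr⟩ := exists_sub_algebraMap_mem_adelicMultiples
    (algebraMap ℚ (FiniteAdeleRing ℤ ℚ) (γ ^ k * δ ^ k) * T.2 - y.2) hM.ne'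
  obtain ⟨a, b, ha, haA, hb, m, hm⟩ := hhit T.1 (y.1 + r) hT0 hT.abs_fst_lt
  have hcongrT := hT.sub_mul_mem_adelicMultiples (Δ := δ ^ k) (b := b)
    (fun v hv => map_pow (v.valuation ℚ) γ k ▸ one_le_pow₀ (le_of_lt hv))
    (fun v _ => map_pow (v.valuation ℚ) (δ : ℚ) k ▸ pow_le_one' (valuation_intCast_le_one v δ) k)
    (ha.trans haA) haA (fun v hv => hcongr a b (by lia) (by lia) v (not_lt.1 hv))
  refine ⟨k * a, k * b, hOM _ r m ?_ ?_⟩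
  · rw [pow_mul, pow_mul]
    exact_mod_cast hm
  · convert add_mem hcongrT hr using 1
    rw [pow_mul, pow_mul, map_sub]
    change algebraMap ℚ (FiniteAdeleRing ℤ ℚ) _ * T.2 - y.2 - _ = _
    ring

theorem dense_of_forall_exists_isNearZero {γ : ℚ} {δ : ℤ} (hγ : γ ≠ 0) (hδ : δ ≠ 0)
    (hind : MultIndep γ δ) {S : Set AModQ}
    (hS : ∀ a b : ℕ, ∀ β ∈ S, mulAct (γ ^ a * (δ : ℚ) ^ b) β ∈ S) {n : ℤ} (hn : n ≠ 0)
    (hnear : ∀ ρ > 0, ∀ N ≠ 0, ∃ T, phiQ T ∈ S ∧ T.1 ≠ 0 ∧ IsNearZero (Pset γ) ρ N n T) :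
    Dense S := by
  refine fun α => mem_closure_iff_nhds.2 fun O hO => ?_
  obtain ⟨y, rfl⟩ := QuotientAddGroup.mk_surjective α
  obtain ⟨ρ, hρ, N, hN, hhit⟩ := exists_forall_isNearZero_phiQ_mem hγ hδ hind hn hO
  obtain ⟨T, hTS, hT0, hT⟩ := hnear ρ hρ N hN
  obtain ⟨a, b, hab⟩ := hhit T hT0 hT
  exact ⟨_, hab, hS a b _ hTS⟩

theorem setOf_near_mem_nhds {γ : ℚ} (w : XP γ) {ρ : ℝ} (hρ : 0 < ρ) {N : ℚ} (hN : N ≠ 0) :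
    {z : XP γ | |z.1 - w.1| < ρ ∧ ∀ v : Pset γ, Valued.v (z.2 v - w.2 v) ≤
      (v : HeightOneSpectrum ℤ).valuation ℚ N} ∈ 𝓝 w := by
  have : Finite (Pset γ) := (HeightOneSpectrum.Support.finite ℤ γ).to_subtype
  have hreal : ∀ᶠ z in 𝓝 w, |z.1 - w.1| < ρ :=
    continuous_fst.continuousAt.eventually (Metric.ball_mem_nhds w.1 hρ)
  refine hreal.and (Filter.eventually_all.2 fun v => ?_)
  have hsub : Continuous fun z : XP γ => z.2 v - w.2 v := by fun_prop
  exact hsub.continuousAt.eventually_mem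
    ((sub_self (w.2 v)).symm ▸ setOf_valued_le_mem_nhds_zero (v : HeightOneSpectrum ℤ) hN)

theorem exists_repF_near_of_mem_closure {γ : ℚ} {S : Set AModQ} {w : XP γ}
    (hw : (w : XPmod γ) ∈ closure (piP γ '' S)) {ρ : ℝ} (hρ : 0 < ρ) {N : ℚ} (hN : N ≠ 0) :
    ∃ β ∈ S, ∃ r : ℚ, (∀ v ∉ Pset γ, v.valuation ℚ r ≤ 1) ∧ |(repF β : AQ).1 - r - w.1| < ρ ∧
      ∀ v : Pset γ, Valued.v ((repF β : AQ).2 v -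
        algebraMap ℚ ((v : HeightOneSpectrum ℤ).adicCompletion ℚ) r - w.2 v) ≤
          (v : HeightOneSpectrum ℤ).valuation ℚ N := by
  obtain ⟨_, ⟨z, ⟨hz1, hz2⟩, hzβ⟩, β, hβ, rfl⟩ := mem_closure_iff_nhds.1 hw _
    ((QuotientAddGroup.isOpenMap_coe (N := iotaSub γ)).image_mem_nhds (setOf_near_mem_nhds w hρ hN))
  obtain ⟨r, hr, hβz⟩ := QuotientAddGroup.eq_iff_sub_mem.1 hzβ.symm
  obtain rfl := eq_sub_of_add_eq' (sub_eq_iff_eq_add.1 hβz).symm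
  exact ⟨β, hβ, r, hr, hz1, hz2⟩

theorem exists_isNearZero_of_mem_closure {γ q : ℚ} {S : Set AModQ}
    (hq : (QuotientAddGroup.mk ((q : ℝ), fun _ => algebraMap ℚ _ q) : XPmod γ) ∈
      closure (piP γ '' S)) {ρ : ℝ} (hρ : 0 < ρ) {N : ℚ} (hN : N ≠ 0) :
    ∃ T, phiQ T ∈ S ∧ IsNearZero (Pset γ) ρ N q.den T := by
  obtain ⟨β, hβ, r, hr, hreal, hfin⟩ := exists_repF_near_of_mem_closure hq hρ hN
  refine ⟨repF β - algebraMap ℚ AQ (r + q), by rwa [phiQ_sub_algebraMap, phiQ_repF], ?_, ?_, ?_⟩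
  · change |(repF β : AQ).1 - ((r + q : ℚ) : ℝ)| < ρ
    rwa [Rat.cast_add, ← sub_sub]
  · intro v hv
    change Valued.v ((repF β : AQ).2 v - algebraMap ℚ (v.adicCompletion ℚ) (r + q)) ≤ _
    rw [map_add, ← sub_sub]
    exact hfin ⟨v, hv⟩
  · intro v hv
    change v.valuation ℚ (q.den : ℚ) *
      Valued.v ((repF β : AQ).2 v - algebraMap ℚ (v.adicCompletion ℚ) (r + q)) ≤ 1
    have hle : Valued.v ((repF β : AQ).2 v - algebraMap ℚ (v.adicCompletion ℚ) (r + q)) ≤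
        max 1 (v.valuation ℚ q) := by
      rw [map_add, ← sub_sub, ← valued_algebraMap v q]
      refine (Valuation.map_sub _ _ _).trans (max_le_max_right _ ?_)
      refine (Valuation.map_sub _ _ _).trans (max_le ((repF β).2.2 v) ?_)
      exact (valued_algebraMap v r).trans_le (hr v hv)
    calc _ ≤ v.valuation ℚ (q.den : ℚ) * max 1 (v.valuation ℚ q) := by gcongr
      _ ≤ 1 := by
        rw [mul_max, mul_one, ← map_mul, Rat.den_mul_eq_num]
        exact max_le (valuation_intCast_le_one v q.den) (valuation_intCast_le_one v q.num)

end AdelicQuotient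

/-- If `γ ∈ ℚ` and `δ ∈ ℤ` are multiplicatively independent, `α ∈ 𝔸/ℚ` has irrational
real coordinate, and some `ι(q)` with `q ∈ ℚ` is an accumulation point of `π(Σα) ⊆ X_𝒫`,
then `Σα` is dense in `𝔸/ℚ`. -/
theorem dense_of_rational_accumulation_point (γ : ℚ) (δ : ℤ) (hγ : γ ≠ 0) (hδ : δ ≠ 0)
    (hind : MultIndep γ (δ : ℚ)) (x : AQ) (hx : Irrational x.1) (q : ℚ)
    (hacc : AccPt
      (QuotientAddGroup.mk (((q : ℝ), fun v => algebraMap ℚ _ q) : XP γ) : XPmod γ)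
      (Filter.principal
        (piP γ '' {β : AModQ | ∃ a b : ℕ, β = mulAct (γ ^ a * (δ : ℚ) ^ b) (phiQ x)}))) :
    Dense {β : AModQ | ∃ a b : ℕ, β = mulAct (γ ^ a * (δ : ℚ) ^ b) (phiQ x)} := by
  refine dense_of_forall_exists_isNearZero hγ hδ hind ?_ (Int.natCast_ne_zero.2 q.den_nz)
    fun ρ hρ N hN => ?_
  · rintro a b _ ⟨a₀, b₀, rfl⟩
    refine ⟨a + a₀, b + b₀, ?_⟩
    rw [mulAct_phiQ, mulAct_phiQ, mulAct_phiQ, ← mul_assoc, ← map_mul, pow_add, pow_add,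
      mul_mul_mul_comm]
  · obtain ⟨T, ⟨a, b, hT⟩, hnear⟩ :=
      exists_isNearZero_of_mem_closure (mem_closure_iff_clusterPt.2 hacc.clusterPt) hρ hN
    have hσ : γ ^ a * (δ : ℚ) ^ b ≠ 0 :=
      mul_ne_zero (pow_ne_zero a hγ) (pow_ne_zero b (Int.cast_ne_zero.2 hδ))
    exact ⟨T, ⟨a, b, hT⟩, (irrational_fst_of_phiQ_eq_mulAct hσ hx hT).ne_zero, hnear⟩
end
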